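/- For x > 0 on the positive real axis (or more generally x ∈ ℂ \ (-∞,0]), the Ramanujan period function satisfies the five-term Hecke relation 2𝓕₁(x) - 𝓕₁(2x) - (1/2)𝓕₁(x/2) - (1/2)𝓕₁((x+1)/2) - (1/(x+1))·𝓕₁(2x/(x+1)) = 0. -/

import Mathlib

open MeasureTheory Set

noncomputable def digammaC (x : ℂ) : ℂ := deriv Complex.Gamma x / Complex.Gamma x

/-- `𝓢₁(x) = ∑ (ψ(nx) - log(nx) + 1/(2nx))`. -/
noncomputable def S1 (x : ℂ) : ℂ :=
  ∑' n : ℕ, (digammaC ((n + 1) * x) - Complex.log ((n + 1) * x) + 1 / (2 * (n + 1) * x))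

/-- The Ramanujan period function `𝓕₁`. -/
noncomputable def F1 (x : ℂ) : ℂ :=
  S1 x - (1 / 2) * ((Real.eulerMascheroniConstant : ℂ) - Complex.log (2 * Real.pi / x))

/-!
The left-hand side is holomorphic on the slit plane, so it suffices that it vanish for `x > 0`.
There the Binet-type integral for `ψ(y) - log y + 1 / (2y)` and a geometric series turn `S1 x`
into `I x = ∫ w(t) v(xt) dt` over `t > 0`, with `v(t) = 1 / (exp t - 1)` and
`w(t) = 1 / t - 1 / 2 - v(t)`. The scaling `∫ w(at) v(bt) dt = I (b / a) / a` realises each term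
of the relation by some pair `(a, b)`, the diagonal pairs giving multiples of `I 1`, and the
addition law `v(s + t) = v(s) v(t) / (1 + v(s) + v(t))` makes a suitable combination of the
integrands an exact derivative. Stirling's formula evaluates `I 1`, and the logarithmic boundary
terms cancel against the elementary part of `F1`.
-/

open Filter Topology

theorem ofReal_mul_mem_slitPlane {z : ℂ} (hz : z ∈ Complex.slitPlane) {a : ℝ} (ha : 0 < a) :
    a * z ∈ Complex.slitPlane := by
  simpa [Complex.mem_slitPlane_iff, ha, ha.ne'] using hz

theorem add_ofReal_mem_slitPlane {z : ℂ} (hz : z ∈ Complex.slitPlane) {b : ℝ} (hb : 0 ≤ b) :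
    z + b ∈ Complex.slitPlane := by
  rw [Complex.mem_slitPlane_iff] at hz ⊢
  simpa using hz.imp_left fun h : 0 < z.re => (by positivity : 0 < z.re + b)

theorem inv_mem_slitPlane {z : ℂ} (hz : z ∈ Complex.slitPlane) : z⁻¹ ∈ Complex.slitPlane := by
  have hnorm : 0 < Complex.normSq z := Complex.normSq_pos.2 (Complex.slitPlane_ne_zero hz)
  rw [Complex.mem_slitPlane_iff] at hz ⊢
  exact hz.imp (fun h => by simpa using div_pos h hnorm)
    fun h => by simpa using ⟨h, Complex.slitPlane_ne_zero (Complex.mem_slitPlane_iff.2 (.inr h))⟩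

theorem ne_neg_natCast_of_mem_slitPlane {z : ℂ} (hz : z ∈ Complex.slitPlane) (m : ℕ) :
    z ≠ -m := by
  rintro rfl
  have hm : (0 : ℝ) ≤ m := m.cast_nonneg
  simp only [Complex.mem_slitPlane_iff, Complex.neg_re, Complex.natCast_re, Complex.neg_im,
    Complex.natCast_im] at hz
  grind

theorem eqOn_slitPlane_of_eq_ofReal {f g : ℂ → ℂ} (hf : DifferentiableOn ℂ f Complex.slitPlane)
    (hg : DifferentiableOn ℂ g Complex.slitPlane) (h : ∀ y : ℝ, 0 < y → f y = g y) :
    EqOn f g Complex.slitPlane := by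
  have hconn : IsPreconnected Complex.slitPlane :=
    (Complex.starConvex_one_slitPlane.isPathConnected (by simp)).isConnected.isPreconnected
  have hofReal : Tendsto ((↑) : ℝ → ℂ) (𝓝[≠] 1) (𝓝[≠] ((1 : ℝ) : ℂ)) :=
    Complex.continuous_ofReal.continuousAt.continuousWithinAt.tendsto_nhdsWithin
      fun t ht => by simpa using ht
  have hpos : ∀ᶠ t : ℝ in 𝓝[≠] 1, f t = g t :=
    nhdsWithin_le_nhds ((lt_mem_nhds one_pos).mono h)
  exact (hf.analyticOnNhd Complex.isOpen_slitPlane).eqOn_of_preconnected_of_frequently_eq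
    (hg.analyticOnNhd Complex.isOpen_slitPlane) hconn (by simp) (hofReal.frequently hpos.frequently)

theorem mul_norm_add_le_norm_add_ofReal {z : ℂ} {c s : ℝ}
    (hz : (2 * c ^ 2 - 1) * ‖z‖ < z.re) (hs : 0 ≤ s) : c * (‖z‖ + s) ≤ ‖z + s‖ := by
  have hre := Complex.re_le_norm z
  have hc1 : c ^ 2 ≤ 1 := by nlinarith [norm_nonneg z]
  have hsq : ‖z + s‖ ^ 2 = ‖z‖ ^ 2 + 2 * s * z.re + s ^ 2 := by
    simp only [Complex.sq_norm, Complex.normSq_apply, Complex.add_re, Complex.add_im,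
      Complex.ofReal_re, Complex.ofReal_im]
    ring
  refine le_of_sq_le_sq ?_ (norm_nonneg _)
  nlinarith [mul_nonneg (sub_nonneg.2 hc1) (sq_nonneg (‖z‖ - s)),
    mul_nonneg hs (sub_nonneg.2 hz.le)]

/-- The truncated sector of points `z` with `‖z‖ > c` and `cos (arg z) > 2 c ^ 2 - 1`, a
neighbourhood on which sums over translates `a * z + b` are controlled uniformly. -/
def truncatedSector (c : ℝ) : Set ℂ := {z | c < ‖z‖ ∧ (2 * c ^ 2 - 1) * ‖z‖ < z.re}

theorem isOpen_truncatedSector (c : ℝ) : IsOpen (truncatedSector c) :=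
  (isOpen_lt continuous_const continuous_norm).inter
    (isOpen_lt (by fun_prop) Complex.continuous_re)

theorem truncatedSector_subset_slitPlane (c : ℝ) :
    truncatedSector c ⊆ Complex.slitPlane := by
  rintro z ⟨-, hz⟩
  rw [Complex.mem_slitPlane_iff_not_le_zero]
  intro hle
  obtain ⟨hre, him⟩ := Complex.nonpos_iff.1 hle
  rw [← Complex.abs_re_eq_norm.2 him, abs_of_nonpos hre] at hz
  nlinarith [sq_nonneg c]

theorem exists_mem_truncatedSector {z : ℂ} (hz : z ∈ Complex.slitPlane) :
    ∃ c > 0, z ∈ truncatedSector c := by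
  have hnorm : 0 < ‖z‖ := norm_pos_iff.2 (Complex.slitPlane_ne_zero hz)
  have hre : (2 * (0 : ℝ) ^ 2 - 1) * ‖z‖ < z.re := by
    suffices -‖z‖ < z.re by simpa
    refine (neg_le_of_abs_le (Complex.abs_re_le_norm z)).lt_of_ne fun h => ?_
    have him : z.im = 0 := Complex.abs_re_eq_norm.1 (by rw [← h, abs_neg, abs_norm])
    rw [Complex.mem_slitPlane_iff] at hz
    grind
  have hcont : Continuous fun c : ℝ => (2 * c ^ 2 - 1) * ‖z‖ := by fun_prop
  have hnear : ∀ᶠ c in 𝓝[>] (0 : ℝ), c < ‖z‖ ∧ (2 * c ^ 2 - 1) * ‖z‖ < z.re :=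
    nhdsWithin_le_nhds ((gt_mem_nhds hnorm).and (hcont.continuousAt.eventually_lt_const hre))
  obtain ⟨c, hc, hpos⟩ := (hnear.and self_mem_nhdsWithin).exists
  exact ⟨c, hpos, hc⟩

theorem sq_mul_add_le_norm_of_mem_truncatedSector {c : ℝ} (hc : 0 < c) {z : ℂ}
    (hz : z ∈ truncatedSector c) {a b : ℝ} (ha : 0 < a) (hb : 0 ≤ b) :
    c ^ 2 * (a + b) ≤ ‖a * z + b‖ := by
  obtain ⟨hnorm, hre⟩ := hz
  have hc1 : c ^ 2 ≤ 1 := by nlinarith [Complex.re_le_norm z]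
  replace hc1 : c ≤ 1 := by nlinarith
  have haz : ‖a * z‖ = a * ‖z‖ := by simp [abs_of_pos ha]
  calc c ^ 2 * (a + b) = c * (a * c + c * b) := by ring
    _ ≤ c * (‖a * z‖ + b) := by rw [haz]; gcongr; nlinarith
    _ ≤ ‖a * z + b‖ := mul_norm_add_le_norm_add_ofReal
      (by rw [haz, Complex.re_ofReal_mul]; nlinarith) hb

/-- The error of the trapezoidal rule for `∫ u in z..z + 1, 1 / u`. -/
noncomputable def trapezoidError (z : ℂ) : ℂ :=
  Complex.log (z + 1) - Complex.log z - (1 / z + 1 / (z + 1)) / 2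

theorem differentiableOn_trapezoidError :
    DifferentiableOn ℂ trapezoidError Complex.slitPlane := by
  refine fun z hz => DifferentiableAt.differentiableWithinAt ?_
  have hz1 : z + 1 ∈ Complex.slitPlane := by simpa using add_ofReal_mem_slitPlane hz zero_le_one
  have hz0 := Complex.slitPlane_ne_zero hz
  have hz10 := Complex.slitPlane_ne_zero hz1
  unfold trapezoidError
  fun_prop (disch := assumption)

theorem hasDerivAt_trapezoidError_segment {z : ℂ} (hz : z ∈ Complex.slitPlane) {s : ℝ}
    (hs : 0 ≤ s) :
    HasDerivAt (fun s : ℝ => Complex.log (z + s) - Complex.log z - s / 2 * (1 / z + (z + s)⁻¹))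
      (-(s : ℂ) ^ 2 / (2 * z * (z + s) ^ 2)) s := by
  have hz0 := Complex.slitPlane_ne_zero hz
  have hzs := add_ofReal_mem_slitPlane hz hs
  have hzs0 := Complex.slitPlane_ne_zero hzs
  have hofReal : HasDerivAt (fun s : ℝ => (s : ℂ)) 1 s := Complex.ofRealCLM.hasDerivAt
  have hadd := hofReal.const_add z
  refine (((hadd.clog_real hzs).sub_const (Complex.log z)).sub
    ((hofReal.div_const 2).mul ((hadd.fun_inv hzs0).const_add (1 / z)))).congr_deriv ?_
  field_simp
  ring

theorem norm_trapezoidError_le {z : ℂ} (hz : z ∈ Complex.slitPlane) {r : ℝ} (hr : 0 < r)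
    (h : ∀ s : ℝ, 0 ≤ s → r ≤ ‖z + s‖) : ‖trapezoidError z‖ ≤ 1 / (2 * r ^ 3) := by
  have hderiv : ∀ s ∈ Ico (0 : ℝ) 1, ‖-(s : ℂ) ^ 2 / (2 * z * (z + s) ^ 2)‖ ≤ 1 / (2 * r ^ 3) := by
    intro s hs
    have hrz : r ≤ ‖z‖ := by simpa using h 0 le_rfl
    have hs2 : s ^ 2 ≤ 1 := pow_le_one₀ hs.1 hs.2.le
    have hden : 2 * r ^ 3 ≤ 2 * ‖z‖ * ‖z + s‖ ^ 2 := by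
      calc 2 * r ^ 3 = 2 * r * r ^ 2 := by ring
        _ ≤ 2 * ‖z‖ * ‖z + s‖ ^ 2 := by gcongr; exact h s hs.1
    simp only [norm_div, norm_neg, norm_pow, norm_mul, Complex.norm_real, Complex.norm_two,
      Real.norm_of_nonneg hs.1]
    gcongr
  have hmvt := norm_image_sub_le_of_norm_deriv_le_segment'
    (fun s hs => (hasDerivAt_trapezoidError_segment hz hs.1).hasDerivWithinAt) hderiv 1 (by simp)
  simpa [trapezoidError, mul_comm, div_eq_mul_inv] using hmvt

theorem norm_trapezoidError_le_of_mem_truncatedSector {c : ℝ} (hc : 0 < c) {z : ℂ}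
    (hz : z ∈ truncatedSector c) {a b : ℝ} (ha : 0 < a) (hb : 0 ≤ b) :
    ‖trapezoidError (a * z + b)‖ ≤ 1 / (2 * (c ^ 2) ^ 3) * (1 / (a + b) ^ 3) := by
  have hmem : a * z + b ∈ Complex.slitPlane := add_ofReal_mem_slitPlane
    (ofReal_mul_mem_slitPlane (truncatedSector_subset_slitPlane c hz) ha) hb
  calc ‖trapezoidError (a * z + b)‖ ≤ 1 / (2 * (c ^ 2 * (a + b)) ^ 3) := by
        refine norm_trapezoidError_le hmem (by positivity) fun s hs => ?_
        calc c ^ 2 * (a + b) ≤ c ^ 2 * (a + (b + s)) := by gcongr; linarith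
          _ ≤ ‖a * z + (b + s : ℝ)‖ :=
            sq_mul_add_le_norm_of_mem_truncatedSector hc hz ha (by positivity)
          _ = ‖a * z + b + s‖ := by rw [Complex.ofReal_add, add_assoc]
    _ = 1 / (2 * (c ^ 2) ^ 3) * (1 / (a + b) ^ 3) := by rw [mul_pow]; field_simp

section TrapezoidSum

variable {ι : Type*} {a b : ι → ℝ}

theorem summable_trapezoidError (ha : ∀ i, 0 < a i) (hb : ∀ i, 0 ≤ b i)
    (hab : Summable fun i => 1 / (a i + b i) ^ 3) {z : ℂ} (hz : z ∈ Complex.slitPlane) :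
    Summable fun i => trapezoidError (a i * z + b i) := by
  obtain ⟨c, hc, hzc⟩ := exists_mem_truncatedSector hz
  exact .of_norm_bounded (hab.mul_left _)
    fun i => norm_trapezoidError_le_of_mem_truncatedSector hc hzc (ha i) (hb i)

theorem differentiableOn_tsum_trapezoidError (ha : ∀ i, 0 < a i) (hb : ∀ i, 0 ≤ b i)
    (hab : Summable fun i => 1 / (a i + b i) ^ 3) :
    DifferentiableOn ℂ (fun z => ∑' i, trapezoidError (a i * z + b i)) Complex.slitPlane := by
  intro z hz
  obtain ⟨c, hc, hzc⟩ := exists_mem_truncatedSector hz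
  have hterm (i : ι) :
      DifferentiableOn ℂ (fun z => trapezoidError (a i * z + b i)) (truncatedSector c) :=
    differentiableOn_trapezoidError.comp (by fun_prop) fun w hw => add_ofReal_mem_slitPlane
      (ofReal_mul_mem_slitPlane (truncatedSector_subset_slitPlane c hw) (ha i)) (hb i)
  have hsum := Complex.differentiableOn_tsum_of_summable_norm (hab.mul_left (1 / (2 * (c ^ 2) ^ 3)))
    hterm (isOpen_truncatedSector c)
    fun i w hw => norm_trapezoidError_le_of_mem_truncatedSector hc hw (ha i) (hb i)
  exact (hsum.differentiableAt
    ((isOpen_truncatedSector c).mem_nhds hzc)).differentiableWithinAt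

end TrapezoidSum

theorem summable_one_div_succ_add_pow_three :
    Summable fun p : ℕ × ℕ => 1 / ((p.1 + 1 : ℝ) + p.2) ^ 3 := by
  have hrow : Summable fun n : ℕ => 1 / (n + 1 : ℝ) ^ (3 / 2 : ℝ) := by
    simpa using (summable_nat_add_iff 1).2
      (Real.summable_one_div_nat_rpow (p := 3 / 2) |>.2 (by norm_num))
  refine .of_nonneg_of_le (fun p => by positivity) (fun p => ?_)
    (hrow.mul_of_nonneg hrow (fun n => by positivity) fun n => by positivity)
  rw [one_div_mul_one_div, ← Real.mul_rpow (by positivity) (by positivity)]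
  refine one_div_le_one_div_of_le (by positivity) ?_
  calc ((p.1 + 1) * (p.2 + 1) : ℝ) ^ (3 / 2 : ℝ)
      ≤ (((p.1 + 1 : ℝ) + p.2) ^ 2) ^ (3 / 2 : ℝ) := by
        gcongr
        have h₁ : (0 : ℝ) ≤ p.1 := p.1.cast_nonneg
        have h₂ : (0 : ℝ) ≤ p.2 := p.2.cast_nonneg
        nlinarith [mul_nonneg h₁ h₂]
    _ = ((p.1 + 1 : ℝ) + p.2) ^ 3 := by
      rw [← Real.rpow_natCast_mul (by positivity), ← Real.rpow_natCast]
      norm_num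

theorem summable_one_div_one_add_pow_three : Summable fun m : ℕ => 1 / ((1 : ℝ) + m) ^ 3 := by
  simpa [Function.comp_def] using summable_one_div_succ_add_pow_three.comp_injective
    (i := fun m : ℕ => ((0 : ℕ), m)) fun _ _ h => by simpa using h

theorem digammaC_eq_digamma : digammaC = Complex.digamma := by
  ext x
  simp [digammaC, Complex.digamma, logDeriv_apply]

/-- The error `ψ y - log y + 1 / (2 * y)` of the two leading terms of the asymptotic expansion of
the digamma function. -/
noncomputable def digammaRemainder (y : ℂ) : ℂ := digammaC y - Complex.log y + 1 / (2 * y)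

theorem digammaRemainder_sub_add_one {y : ℂ} (hy : y ∈ Complex.slitPlane) :
    digammaRemainder y - digammaRemainder (y + 1) = trapezoidError y := by
  have hy1 : y + 1 ∈ Complex.slitPlane := by simpa using add_ofReal_mem_slitPlane hy zero_le_one
  have hy0 := Complex.slitPlane_ne_zero hy
  have hy10 := Complex.slitPlane_ne_zero hy1
  simp only [digammaRemainder, trapezoidError, digammaC_eq_digamma]
  rw [Complex.digamma_apply_add_one y (ne_neg_natCast_of_mem_slitPlane hy)]
  field_simp
  ring

theorem differentiableOn_digammaRemainder :
    DifferentiableOn ℂ digammaRemainder Complex.slitPlane := by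
  have hΓ : DifferentiableOn ℂ Complex.Gamma Complex.slitPlane := fun z hz =>
    (Complex.differentiableAt_Gamma z
      (ne_neg_natCast_of_mem_slitPlane hz)).differentiableWithinAt
  have hψ : DifferentiableOn ℂ digammaC Complex.slitPlane :=
    (hΓ.deriv Complex.isOpen_slitPlane).div hΓ
      fun z hz => Complex.Gamma_ne_zero (ne_neg_natCast_of_mem_slitPlane hz)
  exact (hψ.sub fun z hz => (Complex.differentiableAt_log hz).differentiableWithinAt).add
    ((differentiableOn_const 1).div (by fun_prop)
      fun z hz => mul_ne_zero two_ne_zero (Complex.slitPlane_ne_zero hz))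

theorem ne_neg_natCast_of_pos {y : ℝ} (hy : 0 < y) (m : ℕ) : y ≠ -m :=
  ((neg_nonpos.2 m.cast_nonneg).trans_lt hy).ne'

theorem digammaC_ofReal {y : ℝ} (hy : 0 < y) :
    digammaC y = (deriv (Real.log ∘ Real.Gamma) y : ℝ) := by
  have hΓ := Real.differentiableAt_Gamma (ne_neg_natCast_of_pos hy)
  have hΓC : HasDerivAt (fun x : ℝ => Complex.Gamma x) (deriv Complex.Gamma y) y :=
    (Complex.differentiableAt_Gamma _
      (ne_neg_natCast_of_mem_slitPlane (by simp [hy]))).hasDerivAt.comp_ofReal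
  simp only [Complex.Gamma_ofReal] at hΓC
  rw [Function.comp_def, deriv.log hΓ (Real.Gamma_pos_of_pos hy).ne', digammaC,
    hΓC.unique hΓ.hasDerivAt.ofReal_comp, Complex.Gamma_ofReal, Complex.ofReal_div]

theorem log_Gamma_add_one {y : ℝ} (hy : 0 < y) :
    Real.log (Real.Gamma (y + 1)) = Real.log (Real.Gamma y) + Real.log y := by
  rw [Real.Gamma_add_one hy.ne', Real.log_mul hy.ne' (Real.Gamma_pos_of_pos hy).ne', add_comm]

theorem differentiableAt_log_Gamma {y : ℝ} (hy : 0 < y) :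
    DifferentiableAt ℝ (Real.log ∘ Real.Gamma) y :=
  (Real.differentiableAt_Gamma (ne_neg_natCast_of_pos hy)).log (Real.Gamma_pos_of_pos hy).ne'

theorem slope_log_Gamma_add_one {y : ℝ} (hy : 0 < y) :
    slope (Real.log ∘ Real.Gamma) y (y + 1) = Real.log y := by
  simp [slope_def_field, log_Gamma_add_one hy]

theorem deriv_log_Gamma_le_log {y : ℝ} (hy : 0 < y) :
    deriv (Real.log ∘ Real.Gamma) y ≤ Real.log y :=
  slope_log_Gamma_add_one hy ▸ Real.convexOn_log_Gamma.deriv_le_slope hy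
    (add_pos hy one_pos) (lt_add_one y) (differentiableAt_log_Gamma hy)

theorem log_le_deriv_log_Gamma_add_one {y : ℝ} (hy : 0 < y) :
    Real.log y ≤ deriv (Real.log ∘ Real.Gamma) (y + 1) :=
  slope_log_Gamma_add_one hy ▸ Real.convexOn_log_Gamma.slope_le_deriv hy
    (add_pos hy one_pos) (lt_add_one y) (differentiableAt_log_Gamma (by positivity))

theorem deriv_log_Gamma_add_one {y : ℝ} (hy : 0 < y) :
    deriv (Real.log ∘ Real.Gamma) (y + 1) = deriv (Real.log ∘ Real.Gamma) y + y⁻¹ := by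
  rw [← Complex.ofReal_inj, ← digammaC_ofReal (by positivity), Complex.ofReal_add,
    Complex.ofReal_add, ← digammaC_ofReal hy, digammaC_eq_digamma]
  simpa using Complex.digamma_apply_add_one y
    (ne_neg_natCast_of_mem_slitPlane (by simpa using hy))

theorem norm_digammaRemainder_ofReal_le {y : ℝ} (hy : 0 < y) :
    ‖digammaRemainder y‖ ≤ y⁻¹ := by
  have hreal : digammaRemainder y =
      (deriv (Real.log ∘ Real.Gamma) y - Real.log y + y⁻¹ / 2 : ℝ) := by
    rw [digammaRemainder, digammaC_ofReal hy, ← Complex.ofReal_log hy.le]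
    push_cast
    ring
  have hlower := log_le_deriv_log_Gamma_add_one hy
  rw [deriv_log_Gamma_add_one hy] at hlower
  have hinv : 0 < y⁻¹ := inv_pos.2 hy
  rw [hreal, Complex.norm_real, Real.norm_eq_abs, abs_le]
  constructor <;> linarith [deriv_log_Gamma_le_log hy]

theorem summable_trapezoidError_add_nat {z : ℂ} (hz : z ∈ Complex.slitPlane) :
    Summable fun m : ℕ => trapezoidError (z + m) := by
  simpa using summable_trapezoidError (fun _ => one_pos) (fun m => m.cast_nonneg)
    summable_one_div_one_add_pow_three hz

theorem eq_tsum_trapezoidError {f : ℝ → ℂ} (hf : Tendsto f atTop (𝓝 0))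
    (hstep : ∀ y, 0 < y → f y - f (y + 1) = trapezoidError y) {y : ℝ} (hy : 0 < y) :
    f y = ∑' m : ℕ, trapezoidError (y + m) := by
  have hpartial (M : ℕ) : ∑ m ∈ Finset.range M, trapezoidError (y + m) = f y - f (y + M) := by
    convert! Finset.sum_range_sub' (fun m : ℕ => f (y + m)) M using 2 with m
    · simpa [add_assoc] using (hstep (y + m) (by positivity)).symm
    · simp
  have hshift : Tendsto (fun M : ℕ => f (y + M)) atTop (𝓝 0) :=
    hf.comp (tendsto_atTop_add_const_left atTop y tendsto_natCast_atTop_atTop)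
  have hsum := (summable_trapezoidError_add_nat (z := y) (by simp [hy])).hasSum.tendsto_sum_nat
  simp only [hpartial] at hsum
  simpa using tendsto_nhds_unique (hshift.const_sub (f y)) hsum

theorem digammaRemainder_eq_tsum {z : ℂ} (hz : z ∈ Complex.slitPlane) :
    digammaRemainder z = ∑' m : ℕ, trapezoidError (z + m) := by
  have hdiff := differentiableOn_tsum_trapezoidError (fun _ => one_pos) (fun m => m.cast_nonneg)
    summable_one_div_one_add_pow_three
  simp only [Complex.ofReal_one, one_mul, Complex.ofReal_natCast] at hdiff
  refine eqOn_slitPlane_of_eq_ofReal differentiableOn_digammaRemainder hdiff (fun y hy => ?_) hz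
  refine eq_tsum_trapezoidError (f := fun y => digammaRemainder y) ?_ (fun y hy => ?_) hy
  · exact squeeze_zero_norm' ((eventually_gt_atTop 0).mono
      fun y hy => norm_digammaRemainder_ofReal_le hy) tendsto_inv_atTop_zero
  · simpa using digammaRemainder_sub_add_one (y := y) (by simp [hy])

theorem S1_eq_tsum_digammaRemainder (x : ℂ) :
    S1 x = ∑' n : ℕ, digammaRemainder ((n + 1) * x) :=
  tsum_congr fun n => by rw [digammaRemainder, mul_assoc 2]

theorem S1_eq_tsum_trapezoidError {x : ℂ} (hx : x ∈ Complex.slitPlane) :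
    S1 x = ∑' p : ℕ × ℕ, trapezoidError ((p.1 + 1 : ℝ) * x + (p.2 : ℝ)) := by
  have hsum := summable_trapezoidError (fun p : ℕ × ℕ => p.1.cast_add_one_pos)
    (fun p => p.2.cast_nonneg) summable_one_div_succ_add_pow_three hx
  rw [hsum.tsum_prod, S1_eq_tsum_digammaRemainder]
  refine tsum_congr fun n => ?_
  have hmem := ofReal_mul_mem_slitPlane hx (n.cast_add_one_pos (α := ℝ))
  simpa using digammaRemainder_eq_tsum hmem

theorem differentiableOn_S1 : DifferentiableOn ℂ S1 Complex.slitPlane :=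
  (differentiableOn_tsum_trapezoidError (fun p : ℕ × ℕ => p.1.cast_add_one_pos)
    (fun p => p.2.cast_nonneg) summable_one_div_succ_add_pow_three).congr
    fun _ => S1_eq_tsum_trapezoidError

theorem differentiableOn_F1 : DifferentiableOn ℂ F1 Complex.slitPlane := by
  have hlog : DifferentiableOn ℂ (fun x : ℂ => Complex.log (2 * Real.pi / x))
      Complex.slitPlane := by
    refine fun x hx => DifferentiableAt.differentiableWithinAt ?_
    have hx0 := Complex.slitPlane_ne_zero hx
    have hmem : 2 * Real.pi / x ∈ Complex.slitPlane := by
      simpa [div_eq_mul_inv] using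
        ofReal_mul_mem_slitPlane (inv_mem_slitPlane hx) Real.two_pi_pos
    fun_prop (disch := assumption)
  exact differentiableOn_S1.sub ((hlog.const_sub _).const_mul _)

/-- The Bose–Einstein function `1 / (exp t - 1)`. -/
noncomputable def boseEinstein (t : ℝ) : ℝ := (Real.exp t - 1)⁻¹

theorem boseEinstein_pos {t : ℝ} (ht : 0 < t) : 0 < boseEinstein t :=
  inv_pos.2 (sub_pos.2 (Real.one_lt_exp_iff.2 ht))

theorem exp_eq_one_add_boseEinstein_div {t : ℝ} (ht : 0 < t) :
    Real.exp t = (1 + boseEinstein t) / boseEinstein t := by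
  have hexp : Real.exp t - 1 ≠ 0 := (sub_pos.2 (Real.one_lt_exp_iff.2 ht)).ne'
  rw [boseEinstein]
  field_simp
  ring

theorem exp_neg_mul_one_add_boseEinstein {t : ℝ} (ht : 0 < t) :
    Real.exp (-t) * (1 + boseEinstein t) = boseEinstein t := by
  have hpos := boseEinstein_pos ht
  rw [Real.exp_neg, exp_eq_one_add_boseEinstein_div ht]
  field_simp

theorem boseEinstein_add {s t : ℝ} (hs : 0 < s) (ht : 0 < t) :
    boseEinstein (s + t) =
      boseEinstein s * boseEinstein t / (1 + boseEinstein s + boseEinstein t) := by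
  have hs' := boseEinstein_pos hs
  have ht' := boseEinstein_pos ht
  rw [boseEinstein, Real.exp_add, exp_eq_one_add_boseEinstein_div hs,
    exp_eq_one_add_boseEinstein_div ht, inv_eq_iff_eq_inv]
  field_simp
  ring

theorem hasDerivAt_boseEinstein {t : ℝ} (ht : 0 < t) :
    HasDerivAt boseEinstein (-(boseEinstein t * (1 + boseEinstein t))) t := by
  have hexp : Real.exp t - 1 ≠ 0 := (sub_pos.2 (Real.one_lt_exp_iff.2 ht)).ne'
  refine (((Real.hasDerivAt_exp t).sub_const 1).fun_inv hexp).congr_deriv ?_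
  rw [boseEinstein]
  field_simp
  ring

theorem tendsto_boseEinstein_atTop : Tendsto boseEinstein atTop (𝓝 0) :=
  (tendsto_atTop_add_const_right atTop (-1) Real.tendsto_exp_atTop).inv_tendsto_atTop

theorem measurable_boseEinstein : Measurable boseEinstein := by
  unfold boseEinstein
  fun_prop

theorem hasSum_exp_neg_succ_mul {t : ℝ} (ht : 0 < t) :
    HasSum (fun n : ℕ => Real.exp (-((n + 1) * t))) (boseEinstein t) := by
  have hgeom := (hasSum_geometric_of_lt_one (Real.exp_pos (-t)).le
    (Real.exp_lt_one_iff.2 (neg_lt_zero.2 ht))).mul_left (Real.exp (-t))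
  convert! hgeom using 1
  · ext n
    rw [← Real.exp_nat_mul, ← Real.exp_add]
    ring_nf
  · have hexp : Real.exp t - 1 ≠ 0 := (sub_pos.2 (Real.one_lt_exp_iff.2 ht)).ne'
    rw [boseEinstein, Real.exp_neg]
    field_simp

theorem boseEinstein_le_exp_neg_div {t : ℝ} (ht : 0 < t) :
    boseEinstein t ≤ Real.exp (-(t / 2)) / t := by
  have hsinh : t / 2 ≤ Real.sinh (t / 2) := Real.self_le_sinh_iff.2 (by positivity)
  have hexp : Real.exp t - 1 = Real.exp (t / 2) * (2 * Real.sinh (t / 2)) := by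
    rw [Real.sinh_eq, mul_div_cancel₀ _ two_ne_zero, mul_sub, ← Real.exp_add, ← Real.exp_add]
    simp
  rw [boseEinstein, hexp, mul_inv, ← Real.exp_neg, ← div_eq_mul_inv]
  gcongr
  linarith

/-- The kernel `1 / t - 1 / 2 - 1 / (exp t - 1)` of the Binet-type integral for the digamma
remainder. -/
noncomputable def binetKernel (t : ℝ) : ℝ := 1 / t - 1 / 2 - boseEinstein t

theorem measurable_binetKernel : Measurable binetKernel := by
  have := measurable_boseEinstein
  unfold binetKernel
  fun_prop

theorem binetKernel_nonpos {t : ℝ} (ht : 0 < t) : binetKernel t ≤ 0 := by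
  have hpos : 0 < Real.exp t - 1 := sub_pos.2 (Real.one_lt_exp_iff.2 ht)
  have hlog : 2 * (Real.exp t - 1) / (Real.exp t - 1 + 2) ≤ t := by
    simpa using Real.le_log_one_add_of_nonneg hpos.le
  have hinv : 1 / (1 / 2 + (Real.exp t - 1)⁻¹) = 2 * (Real.exp t - 1) / (Real.exp t - 1 + 2) := by
    field_simp
  rwa [binetKernel, boseEinstein, sub_sub, sub_nonpos, one_div_le ht (by positivity), hinv]

theorem neg_div_four_le_binetKernel {t : ℝ} (ht : 0 < t) : -(t / 4) ≤ binetKernel t := by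
  have hexp : t + t ^ 2 / 2 ≤ Real.exp t - 1 := by
    linarith [Real.quadratic_le_exp_of_nonneg ht.le]
  have hbose : boseEinstein t ≤ 1 / t - 1 / 2 + t / 4 := by
    calc boseEinstein t ≤ (t + t ^ 2 / 2)⁻¹ := inv_anti₀ (by positivity) hexp
      _ ≤ 1 / t - 1 / 2 + t / 4 := by
        rw [inv_le_iff_one_le_mul₀ (by positivity)]
        field_simp
        nlinarith [pow_pos ht 3]
  rw [binetKernel]
  linarith

theorem abs_binetKernel_le {t : ℝ} (ht : 0 < t) : |binetKernel t| ≤ t / 4 :=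
  abs_le.2 ⟨neg_div_four_le_binetKernel ht, (binetKernel_nonpos ht).trans (by positivity)⟩

theorem tendsto_binetKernel_zero : Tendsto binetKernel (𝓝[>] 0) (𝓝 0) := by
  refine squeeze_zero_norm' (a := fun t => t / 4) ?_ ?_
  · filter_upwards [self_mem_nhdsWithin] with t ht using abs_binetKernel_le ht
  · exact (by simpa using (continuous_id.div_const (4 : ℝ)).tendsto 0 :
      Tendsto (fun t : ℝ => t / 4) (𝓝 0) (𝓝 0)).mono_left nhdsWithin_le_nhds

theorem integrableOn_exp_neg_mul {z : ℝ} (hz : 0 < z) :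
    IntegrableOn (fun t => Real.exp (-(z * t))) (Ioi 0) := by
  simpa using integrableOn_exp_mul_Ioi (neg_lt_zero.2 hz) 0

theorem integral_exp_neg_mul {z : ℝ} (hz : 0 < z) :
    ∫ t in Ioi 0, Real.exp (-(z * t)) = 1 / z := by
  simpa using Real.integral_rpow_mul_exp_neg_mul_Ioi one_pos hz

theorem integral_id_mul_exp_neg_mul {z : ℝ} (hz : 0 < z) :
    ∫ t in Ioi 0, t * Real.exp (-(z * t)) = (1 / z) ^ 2 := by
  simpa [show (2 : ℝ) - 1 = 1 by norm_num] using Real.integral_rpow_mul_exp_neg_mul_Ioi two_pos hz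

theorem integrableOn_id_mul_exp_neg_mul {z : ℝ} (hz : 0 < z) :
    IntegrableOn (fun t => t * Real.exp (-(z * t))) (Ioi 0) := by
  simpa using integrableOn_rpow_mul_exp_neg_mul_rpow (s := 1) (p := 1) (by norm_num) one_pos hz

theorem integrableOn_frullani_exp_neg {z : ℝ} (hz : 0 < z) :
    IntegrableOn (fun t => t⁻¹ * (Real.exp (-(z * t)) - Real.exp (-((z + 1) * t)))) (Ioi 0) := by
  refine (integrableOn_exp_neg_mul hz).mono' (by fun_prop)
    ((ae_restrict_iff' measurableSet_Ioi).2 (.of_forall fun t (ht : 0 < t) => ?_))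
  have hfactor : Real.exp (-(z * t)) - Real.exp (-((z + 1) * t)) =
      Real.exp (-(z * t)) * (1 - Real.exp (-t)) := by
    rw [mul_one_sub, ← Real.exp_add]
    ring_nf
  have hle : 1 - Real.exp (-t) ≤ t := by linarith [Real.add_one_le_exp (-t)]
  have hnonneg : 0 ≤ 1 - Real.exp (-t) := by simpa using ht.le
  rw [hfactor, Real.norm_of_nonneg (by positivity), inv_mul_le_iff₀ ht, mul_comm]
  gcongr

theorem integral_frullani_exp_neg {z : ℝ} (hz : 0 < z) :
    ∫ t in Ioi 0, t⁻¹ * (Real.exp (-(z * t)) - Real.exp (-((z + 1) * t))) =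
      Real.log (z + 1) - Real.log z := by
  have hcont : Continuous fun t : ℝ => Real.exp (-t) := by fun_prop
  have hfrullani := Frullani.integral_Ioi_eq (hcont.locallyIntegrable.locallyIntegrableOn _) hz
    (by positivity : 0 < z + 1) (by simpa using (hcont.tendsto 0).mono_left nhdsWithin_le_nhds)
    Real.tendsto_exp_neg_atTop_nhds_zero (integrableOn_frullani_exp_neg hz)
  simpa [Real.log_div (by positivity : z + 1 ≠ 0) hz.ne'] using hfrullani

theorem abs_binetKernel_mul_exp_neg_mul_le {t : ℝ} (ht : 0 < t) (z : ℝ) :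
    |binetKernel t * Real.exp (-(z * t))| ≤ 1 / 4 * (t * Real.exp (-(z * t))) := by
  rw [abs_mul, Real.abs_exp, ← mul_assoc, one_div_mul_eq_div]
  gcongr
  exact abs_binetKernel_le ht

theorem integrableOn_binetKernel_mul_exp_neg_mul {z : ℝ} (hz : 0 < z) :
    IntegrableOn (fun t => binetKernel t * Real.exp (-(z * t))) (Ioi 0) := by
  have := measurable_binetKernel
  exact ((integrableOn_id_mul_exp_neg_mul hz).const_mul (1 / 4)).mono' (by fun_prop)
    ((ae_restrict_iff' measurableSet_Ioi).2
      (.of_forall fun t ht => abs_binetKernel_mul_exp_neg_mul_le ht z))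

theorem integral_norm_binetKernel_mul_exp_neg_mul_le {z : ℝ} (hz : 0 < z) :
    ∫ t in Ioi 0, ‖binetKernel t * Real.exp (-(z * t))‖ ≤ 1 / 4 * (1 / z) ^ 2 := by
  rw [← integral_id_mul_exp_neg_mul hz, ← integral_const_mul]
  exact setIntegral_mono_on (integrableOn_binetKernel_mul_exp_neg_mul hz).norm
    ((integrableOn_id_mul_exp_neg_mul hz).const_mul _) measurableSet_Ioi
    fun t ht => abs_binetKernel_mul_exp_neg_mul_le ht z

/-- The Laplace transform of the Binet kernel. -/
noncomputable def binetIntegral (z : ℝ) : ℝ := ∫ t in Ioi 0, binetKernel t * Real.exp (-(z * t))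

theorem abs_binetIntegral_le {z : ℝ} (hz : 0 < z) : |binetIntegral z| ≤ 1 / 4 * (1 / z) ^ 2 :=
  (norm_integral_le_integral_norm _).trans (integral_norm_binetKernel_mul_exp_neg_mul_le hz)

theorem binetIntegral_sub_add_one {z : ℝ} (hz : 0 < z) :
    binetIntegral z - binetIntegral (z + 1) =
      Real.log (z + 1) - Real.log z - (1 / z + 1 / (z + 1)) / 2 := by
  have hz1 : 0 < z + 1 := by positivity
  have hsplit : EqOn
      (fun t => binetKernel t * Real.exp (-(z * t)) - binetKernel t * Real.exp (-((z + 1) * t)))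
      (fun t => t⁻¹ * (Real.exp (-(z * t)) - Real.exp (-((z + 1) * t))) -
        (Real.exp (-(z * t)) + Real.exp (-((z + 1) * t))) / 2) (Ioi 0) := by
    intro t ht
    have hexp : Real.exp (-((z + 1) * t)) * (1 + boseEinstein t) =
        Real.exp (-(z * t)) * boseEinstein t := by
      rw [show -((z + 1) * t) = -(z * t) + -t by ring, Real.exp_add, mul_assoc,
        exp_neg_mul_one_add_boseEinstein ht]
    simp only [binetKernel]
    linear_combination hexp
  have hmean : IntegrableOn
      (fun t => (Real.exp (-(z * t)) + Real.exp (-((z + 1) * t))) / 2) (Ioi 0) :=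
    ((integrableOn_exp_neg_mul hz).add (integrableOn_exp_neg_mul hz1)).div_const 2
  rw [binetIntegral, binetIntegral, ← integral_sub (integrableOn_binetKernel_mul_exp_neg_mul hz)
    (integrableOn_binetKernel_mul_exp_neg_mul hz1), setIntegral_congr_fun measurableSet_Ioi hsplit,
    integral_sub (integrableOn_frullani_exp_neg hz) hmean, integral_frullani_exp_neg hz,
    integral_div, integral_add (integrableOn_exp_neg_mul hz) (integrableOn_exp_neg_mul hz1),
    integral_exp_neg_mul hz, integral_exp_neg_mul hz1]

theorem tendsto_binetIntegral_atTop : Tendsto binetIntegral atTop (𝓝 0) := by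
  have hbound : Tendsto (fun z : ℝ => 1 / 4 * (1 / z) ^ 2) atTop (𝓝 0) := by
    simpa using (tendsto_inv_atTop_zero.pow 2).const_mul (1 / 4 : ℝ)
  refine squeeze_zero_norm' ?_ hbound
  filter_upwards [eventually_gt_atTop 0] with z hz using abs_binetIntegral_le hz

theorem digammaRemainder_eq_binetIntegral {y : ℝ} (hy : 0 < y) :
    digammaRemainder y = binetIntegral y := by
  rw [digammaRemainder_eq_tsum (by simpa using hy)]
  refine (eq_tsum_trapezoidError (f := fun y => binetIntegral y)
    ((Complex.continuous_ofReal.tendsto' 0 0 rfl).comp tendsto_binetIntegral_atTop)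
    (fun z hz => ?_) hy).symm
  rw [← Complex.ofReal_sub, binetIntegral_sub_add_one hz, trapezoidError]
  push_cast [Complex.ofReal_log hz.le, Complex.ofReal_log (by positivity : 0 ≤ z + 1)]
  rfl

/-- The pairing of the Binet kernel with the Bose–Einstein function at scales `a` and `b`; the
relation satisfied by `F1` comes from an algebraic relation between integrands of this shape. -/
noncomputable def bosePairing (a b : ℝ) : ℝ :=
  ∫ t in Ioi 0, binetKernel (a * t) * boseEinstein (b * t)

theorem integrableOn_bosePairing {a b : ℝ} (ha : 0 < a) (hb : 0 < b) :
    IntegrableOn (fun t => binetKernel (a * t) * boseEinstein (b * t)) (Ioi 0) := by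
  have hw := measurable_binetKernel
  have hv := measurable_boseEinstein
  refine ((integrableOn_exp_neg_mul (half_pos hb)).const_mul (a / (4 * b))).mono' (by fun_prop)
    ((ae_restrict_iff' measurableSet_Ioi).2 (.of_forall fun t (ht : 0 < t) => ?_))
  have hbt : 0 < b * t := by positivity
  calc ‖binetKernel (a * t) * boseEinstein (b * t)‖
      = |binetKernel (a * t)| * boseEinstein (b * t) := by
        rw [norm_mul, Real.norm_eq_abs, Real.norm_of_nonneg (boseEinstein_pos hbt).le]
    _ ≤ a * t / 4 * (Real.exp (-(b * t / 2)) / (b * t)) := by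
        gcongr
        · exact (boseEinstein_pos hbt).le
        · exact abs_binetKernel_le (by positivity)
        · exact boseEinstein_le_exp_neg_div hbt
    _ = a / (4 * b) * Real.exp (-(b / 2 * t)) := by
        rw [mul_div_right_comm b]
        field_simp

theorem bosePairing_mul_mul {c : ℝ} (hc : 0 < c) (a b : ℝ) :
    bosePairing (c * a) (c * b) = bosePairing a b / c := by
  have hscale := integral_comp_mul_left_Ioi
    (fun t => binetKernel (a * t) * boseEinstein (b * t)) 0 hc
  simpa [bosePairing, mul_assoc, mul_left_comm c, div_eq_inv_mul] using hscale

theorem bosePairing_eq_one_left {a : ℝ} (ha : 0 < a) (b : ℝ) :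
    bosePairing a b = bosePairing 1 (b / a) / a := by
  rw [← bosePairing_mul_mul ha, mul_one, mul_div_cancel₀ b ha.ne']

theorem hasSum_binetIntegral {x : ℝ} (hx : 0 < x) :
    HasSum (fun n : ℕ => binetIntegral ((n + 1) * x)) (bosePairing 1 x) := by
  have hpos (n : ℕ) : 0 < (n + 1) * x := by positivity
  have hsummable : Summable fun n : ℕ => 1 / 4 * (1 / ((n + 1) * x)) ^ 2 := by
    convert! ((summable_nat_add_iff 1).2 (Real.summable_one_div_nat_pow.2 one_lt_two)).mul_left
      (1 / 4 * (1 / x) ^ 2) using 2 with n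
    push_cast
    field_simp
  convert! hasSum_integral_of_summable_integral_norm
    (fun n => integrableOn_binetKernel_mul_exp_neg_mul (hpos n))
    (hsummable.of_nonneg_of_le (fun n => integral_nonneg fun t => norm_nonneg _)
      fun n => integral_norm_binetKernel_mul_exp_neg_mul_le (hpos n)) using 1
  refine setIntegral_congr_fun measurableSet_Ioi fun t (ht : 0 < t) => ?_
  have hsum := (hasSum_exp_neg_succ_mul (by positivity : 0 < x * t)).mul_left (binetKernel t)
  simpa [mul_assoc] using hsum.tsum_eq.symm

theorem S1_ofReal {x : ℝ} (hx : 0 < x) : S1 x = bosePairing 1 x := by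
  rw [S1_eq_tsum_digammaRemainder, ← (hasSum_binetIntegral hx).tsum_eq, Complex.ofReal_tsum]
  refine tsum_congr fun n => ?_
  rw [← digammaRemainder_eq_binetIntegral (by positivity)]
  push_cast
  rfl

theorem digammaRemainder_natCast_add_one (n : ℕ) :
    digammaRemainder (n + 1) = ((harmonic n - Real.eulerMascheroniConstant - Real.log (n + 1) +
      1 / (2 * (n + 1)) : ℝ) : ℂ) := by
  have hfactorial : (n.factorial : ℂ) ≠ 0 := by exact_mod_cast n.factorial_ne_zero
  have hdigamma : digammaC (n + 1) = -Real.eulerMascheroniConstant + harmonic n := by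
    rw [digammaC, Complex.deriv_Gamma_nat, Complex.Gamma_nat_eq_factorial,
      mul_div_cancel_left₀ _ hfactorial]
  rw [digammaRemainder, hdigamma]
  push_cast [Complex.ofReal_log (by positivity : (0 : ℝ) ≤ n + 1)]
  ring

theorem binetIntegral_natCast_add_one (n : ℕ) :
    binetIntegral (n + 1) =
      harmonic n - Real.eulerMascheroniConstant - Real.log (n + 1) + 1 / (2 * (n + 1)) := by
  rw [← Complex.ofReal_inj, ← digammaRemainder_eq_binetIntegral (by positivity),
    ← digammaRemainder_natCast_add_one]
  push_cast
  rfl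

theorem sum_range_binetIntegral (N : ℕ) :
    ∑ n ∈ Finset.range N, binetIntegral (n + 1) =
      (N + 1 / 2) * harmonic N - N - Real.eulerMascheroniConstant * N - Real.log N.factorial := by
  induction N with
  | zero => simp
  | succ N ih =>
    rw [Finset.sum_range_succ, ih, binetIntegral_natCast_add_one, harmonic_succ,
      Nat.factorial_succ, Nat.cast_mul, Real.log_mul (by positivity) (by positivity)]
    push_cast
    field_simp
    ring

theorem tendsto_mul_binetIntegral_atTop :
    Tendsto (fun z => z * binetIntegral z) atTop (𝓝 0) := by
  refine squeeze_zero_norm' (a := fun z => 1 / 4 * z⁻¹) ?_ ?_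
  · filter_upwards [eventually_gt_atTop 0] with z hz
    calc ‖z * binetIntegral z‖ ≤ z * (1 / 4 * (1 / z) ^ 2) := by
          rw [norm_mul, Real.norm_of_nonneg hz.le]
          gcongr
          exact abs_binetIntegral_le hz
      _ = 1 / 4 * z⁻¹ := by field_simp
  · simpa using tendsto_inv_atTop_zero.const_mul (1 / 4 : ℝ)

theorem bosePairing_one_one :
    bosePairing 1 1 = (1 + Real.eulerMascheroniConstant - Real.log (2 * Real.pi)) / 2 := by
  have hsum : Tendsto (fun N : ℕ => ∑ n ∈ Finset.range (N + 1), binetIntegral (n + 1)) atTop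
      (𝓝 (bosePairing 1 1)) := by
    simpa using (tendsto_add_atTop_iff_nat 1).2 (hasSum_binetIntegral one_pos).tendsto_sum_nat
  refine tendsto_nhds_unique hsum ?_
  have hbinet : Tendsto (fun N : ℕ => ((N : ℝ) + 1) * binetIntegral (N + 1)) atTop (𝓝 0) :=
    tendsto_mul_binetIntegral_atTop.comp
      (tendsto_atTop_add_const_right _ 1 tendsto_natCast_atTop_atTop)
  have hinv : Tendsto (fun N : ℕ => 1 / ((N : ℝ) + 1)) atTop (𝓝 0) :=
    tendsto_one_div_add_atTop_nhds_zero_nat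
  have hstirling : Tendsto (fun N : ℕ => Real.log (Stirling.stirlingSeq (N + 1))) atTop
      (𝓝 (Real.log √Real.pi)) :=
    ((tendsto_add_atTop_iff_nat 1).2 Stirling.tendsto_stirlingSeq_sqrt_pi).log (by positivity)
  convert! (((hbinet.mul ((hinv.const_mul (1 / 2)).const_add 1)).add (hinv.const_mul (1 / 4))).sub
    hstirling).add_const ((1 + Real.eulerMascheroniConstant - Real.log 2) / 2) using 1
  · ext N
    rw [sum_range_binetIntegral, binetIntegral_natCast_add_one, Stirling.log_stirlingSeq_formula,
      Real.log_mul two_ne_zero (by positivity), Real.log_div (by positivity) (by positivity),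
      Real.log_exp, harmonic_succ]
    push_cast
    field_simp
    ring
  · rw [Real.log_mul two_ne_zero (by positivity), Real.log_sqrt (by positivity)]
    congr 1
    ring

/-- A primitive of the Bose–Einstein function, equal to `log (1 - exp (-t))`. -/
noncomputable def boseEinsteinPrimitive (t : ℝ) : ℝ := -Real.log (1 + boseEinstein t)

theorem hasDerivAt_boseEinsteinPrimitive {t : ℝ} (ht : 0 < t) :
    HasDerivAt boseEinsteinPrimitive (boseEinstein t) t := by
  have hpos : 1 + boseEinstein t ≠ 0 := (add_pos one_pos (boseEinstein_pos ht)).ne'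
  refine (((hasDerivAt_boseEinstein ht).const_add 1).log hpos).neg.congr_deriv ?_
  field_simp

theorem tendsto_boseEinsteinPrimitive_atTop : Tendsto boseEinsteinPrimitive atTop (𝓝 0) := by
  unfold boseEinsteinPrimitive
  simpa using ((tendsto_boseEinstein_atTop.const_add 1).log (by simp)).neg

theorem tendsto_boseEinstein_sub_inv_zero :
    Tendsto (fun t => boseEinstein t - 1 / t) (𝓝[>] 0) (𝓝 (-(1 / 2))) := by
  convert! (tendsto_binetKernel_zero.add_const (1 / 2)).neg using 2 with t
  · rw [binetKernel]
    ring
  · ring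

theorem tendsto_boseEinsteinPrimitive_sub_log_zero :
    Tendsto (fun t => boseEinsteinPrimitive t - Real.log t) (𝓝[>] 0) (𝓝 0) := by
  have hid : Tendsto (fun t : ℝ => t) (𝓝[>] 0) (𝓝 0) := nhdsWithin_le_nhds
  have hone : Tendsto (fun t : ℝ => 1 + t + t * (boseEinstein t - 1 / t)) (𝓝[>] 0) (𝓝 1) := by
    simpa using (hid.const_add 1).add (hid.mul tendsto_boseEinstein_sub_inv_zero)
  have hlog := (hone.log one_ne_zero).neg
  rw [Real.log_one, neg_zero] at hlog
  refine hlog.congr' ?_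
  filter_upwards [self_mem_nhdsWithin] with t (ht : 0 < t)
  have hpos := boseEinstein_pos ht
  have hprod : 1 + t + t * (boseEinstein t - 1 / t) = t * (1 + boseEinstein t) := by
    field_simp
    ring
  rw [hprod, Real.log_mul ht.ne' (by positivity), boseEinsteinPrimitive]
  ring

/-- A primitive of the combination of products `binetKernel (a * t) * boseEinstein (b * t)` that
yields the five-term relation at `x`. -/
noncomputable def fiveTermPrimitive (x t : ℝ) : ℝ :=
  (boseEinstein ((x + 1) * t) - boseEinstein (x * t)) / 2 + boseEinstein (2 * x * t) / (x + 1) -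
    boseEinsteinPrimitive (x * t) / 4 +
    (1 / 4 - 1 / (2 * (x + 1))) * boseEinsteinPrimitive ((x + 1) * t) +
    boseEinsteinPrimitive (2 * x * t) / (2 * (x + 1))

/-- The derivative of `fiveTermPrimitive x`. Unlike the products it is a combination of, it involves
no `1 / t`. -/
noncomputable def fiveTermIntegrand (x t : ℝ) : ℝ :=
  x / 2 * (boseEinstein (x * t) * (1 / 2 + boseEinstein (x * t))) -
    (x + 1) / 2 * (boseEinstein ((x + 1) * t) * (1 / 2 + boseEinstein ((x + 1) * t))) -
    2 * x / (x + 1) * (boseEinstein (2 * x * t) * (1 / 2 + boseEinstein (2 * x * t))) -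
    boseEinstein ((x + 1) * t) / 2

theorem hasDerivAt_fiveTermPrimitive {x t : ℝ} (hx : 0 < x) (ht : 0 < t) :
    HasDerivAt (fiveTermPrimitive x) (fiveTermIntegrand x t) t := by
  have hbose {a : ℝ} (ha : 0 < a) :=
    (hasDerivAt_boseEinstein (mul_pos ha ht)).comp t (hasDerivAt_const_mul a)
  have hprimitive {a : ℝ} (ha : 0 < a) :=
    (hasDerivAt_boseEinsteinPrimitive (mul_pos ha ht)).comp t (hasDerivAt_const_mul a)
  have hx1 : 0 < x + 1 := by positivity
  have h2x : 0 < 2 * x := by positivity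
  refine (((((((hbose hx1).sub (hbose hx)).div_const 2).add
    ((hbose h2x).div_const (x + 1))).sub ((hprimitive hx).div_const 4)).add
    ((hprimitive hx1).const_mul (1 / 4 - 1 / (2 * (x + 1))))).add
    ((hprimitive h2x).div_const (2 * (x + 1)))).congr_deriv ?_
  rw [fiveTermIntegrand]
  field_simp
  ring

theorem tendsto_fiveTermPrimitive_atTop {x : ℝ} (hx : 0 < x) :
    Tendsto (fiveTermPrimitive x) atTop (𝓝 0) := by
  have hbose {a : ℝ} (ha : 0 < a) :=
    tendsto_boseEinstein_atTop.comp (tendsto_id.const_mul_atTop ha)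
  have hprimitive {a : ℝ} (ha : 0 < a) :=
    tendsto_boseEinsteinPrimitive_atTop.comp (tendsto_id.const_mul_atTop ha)
  have hx1 : 0 < x + 1 := by positivity
  have h2x : 0 < 2 * x := by positivity
  have hlim := ((((((hbose hx1).sub (hbose hx)).div_const 2).add
    ((hbose h2x).div_const (x + 1))).sub ((hprimitive hx).div_const 4)).add
    ((hprimitive hx1).const_mul (1 / 4 - 1 / (2 * (x + 1))))).add
    ((hprimitive h2x).div_const (2 * (x + 1)))
  simp only [sub_zero, zero_div, add_zero, mul_zero] at hlim
  exact hlim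

/-- The limit of `fiveTermPrimitive x` at `0` from the right. -/
noncomputable def fiveTermBoundaryValue (x : ℝ) : ℝ :=
  (Real.log (x + 1) - Real.log x) / 4 + (Real.log (2 * x) - Real.log (x + 1) - 1) / (x + 1) / 2

theorem tendsto_fiveTermPrimitive_zero {x : ℝ} (hx : 0 < x) :
    Tendsto (fiveTermPrimitive x) (𝓝[>] 0) (𝓝 (fiveTermBoundaryValue x)) := by
  have hscale {a : ℝ} (ha : 0 < a) : Tendsto (a * ·) (𝓝[>] 0) (𝓝[>] 0) :=
    tendsto_iff_comap.2 (comap_mulLeft_nhdsGT_zero ha).ge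
  have hbose {a : ℝ} (ha : 0 < a) := tendsto_boseEinstein_sub_inv_zero.comp (hscale ha)
  have hprimitive {a : ℝ} (ha : 0 < a) :=
    tendsto_boseEinsteinPrimitive_sub_log_zero.comp (hscale ha)
  have hx1 : 0 < x + 1 := by positivity
  have h2x : 0 < 2 * x := by positivity
  have hlim := (((((((hbose hx1).sub (hbose hx)).div_const 2).add
    ((hbose h2x).div_const (x + 1))).sub ((hprimitive hx).div_const 4)).add
    ((hprimitive hx1).const_mul (1 / 4 - 1 / (2 * (x + 1))))).add
    ((hprimitive h2x).div_const (2 * (x + 1)))).add_const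
    (fiveTermBoundaryValue x + 1 / (2 * (x + 1)))
  convert! hlim.congr' ?_ using 2
  · field_simp
    ring
  · filter_upwards [self_mem_nhdsWithin] with t (ht : 0 < t)
    simp only [Function.comp_apply, fiveTermPrimitive, fiveTermBoundaryValue]
    rw [Real.log_mul hx.ne' ht.ne', Real.log_mul hx1.ne' ht.ne', Real.log_mul h2x.ne' ht.ne']
    field_simp
    ring

theorem integral_fiveTermIntegrand {x : ℝ} (hx : 0 < x)
    (hint : IntegrableOn (fiveTermIntegrand x) (Ioi 0)) :
    ∫ t in Ioi 0, fiveTermIntegrand x t = -fiveTermBoundaryValue x := by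
  have hparts := integral_Ioi_deriv_mul_eq_sub (u := fiveTermPrimitive x) (v := 1)
    (u' := fiveTermIntegrand x) (v' := 0) (a := 0)
    (a' := fiveTermBoundaryValue x) (b' := 0)
    (fun t ht => hasDerivAt_fiveTermPrimitive hx ht) (fun t _ => hasDerivAt_one t)
    (by simpa using hint)
    (by simpa using tendsto_fiveTermPrimitive_zero hx)
    (by simpa using tendsto_fiveTermPrimitive_atTop hx)
  simpa using hparts

theorem boseEinstein_quadratic_relation {s t : ℝ} (hs : 0 < s) (ht : 0 < t) :
    (1 / 2 + boseEinstein t) * (boseEinstein (2 * s) - boseEinstein s) +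
      (1 / 2 + boseEinstein (2 * t)) *
        (boseEinstein s + boseEinstein (s + t) - 2 * boseEinstein (2 * s)) +
      (1 / 2 + boseEinstein (s + t)) * boseEinstein (2 * s) = -(boseEinstein (s + t) / 2) := by
  have hspos := boseEinstein_pos hs
  have htpos := boseEinstein_pos ht
  rw [two_mul s, two_mul t, boseEinstein_add hs hs, boseEinstein_add ht ht, boseEinstein_add hs ht]
  field_simp
  ring

theorem fiveTermIntegrand_eq {x t : ℝ} (hx : 0 < x) (ht : 0 < t) :
    fiveTermIntegrand x t =
      binetKernel t * boseEinstein (x * t) - binetKernel t * boseEinstein (2 * x * t) -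
        binetKernel (2 * t) * boseEinstein (x * t) -
        binetKernel (2 * t) * boseEinstein ((x + 1) * t) -
        binetKernel ((x + 1) * t) * boseEinstein (2 * x * t) +
        2 * (binetKernel (2 * t) * boseEinstein (2 * x * t)) -
        x / 2 * (binetKernel (x * t) * boseEinstein (x * t)) +
        (x + 1) / 2 * (binetKernel ((x + 1) * t) * boseEinstein ((x + 1) * t)) +
        2 * x / (x + 1) * (binetKernel (2 * x * t) * boseEinstein (2 * x * t)) := by
  have hpolar : 1 / t * boseEinstein (x * t) - 1 / t * boseEinstein (2 * x * t) -
      1 / (2 * t) * boseEinstein (x * t) - 1 / (2 * t) * boseEinstein ((x + 1) * t) -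
      1 / ((x + 1) * t) * boseEinstein (2 * x * t) + 2 * (1 / (2 * t) * boseEinstein (2 * x * t)) -
      x / 2 * (1 / (x * t) * boseEinstein (x * t)) +
      (x + 1) / 2 * (1 / ((x + 1) * t) * boseEinstein ((x + 1) * t)) +
      2 * x / (x + 1) * (1 / (2 * x * t) * boseEinstein (2 * x * t)) = 0 := by
    field_simp
    ring
  have hregular := boseEinstein_quadratic_relation (by positivity : 0 < x * t) ht
  rw [← mul_assoc, ← add_one_mul] at hregular
  simp only [fiveTermIntegrand, binetKernel]
  linear_combination - hpolar - hregular

theorem integrableOn_sum_bosePairing {ι : Type*} (s : Finset ι) (c : ι → ℝ) {a b : ι → ℝ}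
    (ha : ∀ i, 0 < a i) (hb : ∀ i, 0 < b i) :
    IntegrableOn (fun t => ∑ i ∈ s, c i * (binetKernel (a i * t) * boseEinstein (b i * t)))
      (Ioi 0) :=
  integrable_finsetSum s fun i _ => (integrableOn_bosePairing (ha i) (hb i)).const_mul (c i)

theorem integral_sum_bosePairing {ι : Type*} (s : Finset ι) (c : ι → ℝ) {a b : ι → ℝ}
    (ha : ∀ i, 0 < a i) (hb : ∀ i, 0 < b i) :
    ∫ t in Ioi 0, ∑ i ∈ s, c i * (binetKernel (a i * t) * boseEinstein (b i * t)) =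
      ∑ i ∈ s, c i * bosePairing (a i) (b i) := by
  rw [integral_finsetSum s fun i _ => (integrableOn_bosePairing (ha i) (hb i)).const_mul (c i)]
  simp only [integral_const_mul, bosePairing]

theorem integral_fiveTermIntegrand_eq_bosePairing {x : ℝ} (hx : 0 < x) :
    IntegrableOn (fiveTermIntegrand x) (Ioi 0) ∧ ∫ t in Ioi 0, fiveTermIntegrand x t =
      bosePairing 1 x - bosePairing 1 (2 * x) - bosePairing 2 x - bosePairing 2 (x + 1) -
        bosePairing (x + 1) (2 * x) + 2 * bosePairing 2 (2 * x) - x / 2 * bosePairing x x +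
        (x + 1) / 2 * bosePairing (x + 1) (x + 1) +
        2 * x / (x + 1) * bosePairing (2 * x) (2 * x) := by
  have hx1 : 0 < x + 1 := by positivity
  let a : Fin 9 → ℝ := ![1, 1, 2, 2, x + 1, 2, x, x + 1, 2 * x]
  let b : Fin 9 → ℝ := ![x, 2 * x, x, x + 1, 2 * x, 2 * x, x, x + 1, 2 * x]
  let c : Fin 9 → ℝ := ![1, -1, -1, -1, -1, 2, -(x / 2), (x + 1) / 2, 2 * x / (x + 1)]
  have ha : ∀ i, 0 < a i := by simp [Fin.forall_fin_succ, a, hx, hx1]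
  have hb : ∀ i, 0 < b i := by simp [Fin.forall_fin_succ, b, hx, hx1]
  have hexpand (f : ℝ → ℝ → ℝ) : ∑ i, c i * f (a i) (b i) =
      f 1 x - f 1 (2 * x) - f 2 x - f 2 (x + 1) - f (x + 1) (2 * x) + 2 * f 2 (2 * x) -
        x / 2 * f x x + (x + 1) / 2 * f (x + 1) (x + 1) +
        2 * x / (x + 1) * f (2 * x) (2 * x) := by
    simp only [Fin.sum_univ_succ, Matrix.cons_val_zero, Matrix.cons_val_succ,
      Finset.univ_unique, Fin.default_eq_zero, Matrix.cons_val_fin_one, Finset.sum_singleton,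
      a, b, c]
    ring
  have hintegrand : EqOn (fun t => ∑ i, c i * (binetKernel (a i * t) * boseEinstein (b i * t)))
      (fiveTermIntegrand x) (Ioi 0) := fun t ht =>
    (hexpand fun a b => binetKernel (a * t) * boseEinstein (b * t)).trans
      (by rw [fiveTermIntegrand_eq hx ht, one_mul])
  refine ⟨(integrableOn_sum_bosePairing Finset.univ c ha hb).congr_fun hintegrand
    measurableSet_Ioi, ?_⟩
  rw [← setIntegral_congr_fun measurableSet_Ioi hintegrand, integral_sum_bosePairing _ c ha hb,
    hexpand]

theorem bosePairing_five_term {x : ℝ} (hx : 0 < x) :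
    2 * bosePairing 1 x - bosePairing 1 (2 * x) - 1 / 2 * bosePairing 1 (x / 2) -
      1 / 2 * bosePairing 1 ((x + 1) / 2) - 1 / (x + 1) * bosePairing 1 (2 * x / (x + 1)) =
      -(1 / (x + 1)) * bosePairing 1 1 - fiveTermBoundaryValue x := by
  have hx1 : 0 < x + 1 := by positivity
  have h2x : 0 < 2 * x := by positivity
  obtain ⟨hint, hpairing⟩ := integral_fiveTermIntegrand_eq_bosePairing hx
  rw [integral_fiveTermIntegrand hx hint, bosePairing_eq_one_left two_pos x,
    bosePairing_eq_one_left two_pos (x + 1), bosePairing_eq_one_left two_pos (2 * x),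
    bosePairing_eq_one_left hx1 (2 * x), bosePairing_eq_one_left hx x,
    bosePairing_eq_one_left hx1 (x + 1), bosePairing_eq_one_left h2x (2 * x), div_self hx.ne',
    div_self hx1.ne', div_self h2x.ne', mul_div_cancel_left₀ x two_ne_zero] at hpairing
  have hx_one : x / 2 * (bosePairing 1 1 / x) = bosePairing 1 1 / 2 := by field_simp
  have hx1_one : (x + 1) / 2 * (bosePairing 1 1 / (x + 1)) = bosePairing 1 1 / 2 := by field_simp
  have h2x_one : 2 * x / (x + 1) * (bosePairing 1 1 / (2 * x)) = 1 / (x + 1) * bosePairing 1 1 := by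
    field_simp
  linear_combination -hpairing + hx_one - hx1_one - h2x_one

theorem F1_ofReal {x : ℝ} (hx : 0 < x) :
    F1 x = ((bosePairing 1 x -
      (Real.eulerMascheroniConstant - Real.log (2 * Real.pi) + Real.log x) / 2 : ℝ) : ℂ) := by
  have hlog : Complex.log (2 * Real.pi / x) =
      ((Real.log (2 * Real.pi) - Real.log x : ℝ) : ℂ) := by
    rw [← Real.log_div (by positivity) hx.ne', Complex.ofReal_log (by positivity)]
    push_cast
    rfl
  rw [F1, S1_ofReal hx, hlog]
  push_cast
  ring

/-- The left-hand side of the five-term relation. -/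
noncomputable def fiveTermF1 (z : ℂ) : ℂ :=
  2 * F1 z - F1 (2 * z) - (1 / 2) * F1 (z / 2) - (1 / 2) * F1 ((z + 1) / 2) -
    (1 / (z + 1)) * F1 (2 * z / (z + 1))

theorem fiveTermF1_ofReal {x : ℝ} (hx : 0 < x) : fiveTermF1 x = 0 := by
  have hx1 : 0 < x + 1 := by positivity
  let r (y : ℝ) : ℝ := bosePairing 1 y -
    (Real.eulerMascheroniConstant - Real.log (2 * Real.pi) + Real.log y) / 2
  have hr {y : ℝ} (hy : 0 < y) : (r y : ℂ) = F1 y := (F1_ofReal hy).symm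
  have hreal : fiveTermF1 x = ((2 * r x - r (2 * x) - 1 / 2 * r (x / 2) -
      1 / 2 * r ((x + 1) / 2) - 1 / (x + 1) * r (2 * x / (x + 1)) : ℝ) : ℂ) := by
    have h2x : 0 < 2 * x := by positivity
    push_cast [hr hx, hr h2x, hr (half_pos hx), hr (half_pos hx1), hr (div_pos h2x hx1)]
    rfl
  have hrel := bosePairing_five_term hx
  rw [bosePairing_one_one, fiveTermBoundaryValue, Real.log_mul two_ne_zero hx.ne'] at hrel
  rw [hreal, Complex.ofReal_eq_zero]
  simp only [r]
  rw [Real.log_div (by positivity) hx1.ne', Real.log_mul two_ne_zero hx.ne',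
    Real.log_div hx.ne' two_ne_zero, Real.log_div hx1.ne' two_ne_zero]
  linear_combination hrel

theorem div_two_mem_slitPlane {z : ℂ} (hz : z ∈ Complex.slitPlane) : z / 2 ∈ Complex.slitPlane := by
  simpa [div_eq_inv_mul] using ofReal_mul_mem_slitPlane hz (by norm_num : (0 : ℝ) < 2⁻¹)

theorem two_mul_div_add_one_mem_slitPlane {z : ℂ} (hz : z ∈ Complex.slitPlane) :
    2 * z / (z + 1) ∈ Complex.slitPlane := by
  have hz0 := Complex.slitPlane_ne_zero hz
  have hmean := inv_mem_slitPlane (div_two_mem_slitPlane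
    (by simpa using add_ofReal_mem_slitPlane (inv_mem_slitPlane hz) zero_le_one :
      z⁻¹ + 1 ∈ Complex.slitPlane))
  convert! hmean using 1
  field_simp
  ring

theorem differentiableOn_fiveTermF1 : DifferentiableOn ℂ fiveTermF1 Complex.slitPlane := by
  intro z hz
  have hadd : z + 1 ∈ Complex.slitPlane := by simpa using add_ofReal_mem_slitPlane hz zero_le_one
  have hadd_ne : z + 1 ≠ 0 := Complex.slitPlane_ne_zero hadd
  have hF {g : ℂ → ℂ} (hmem : g z ∈ Complex.slitPlane) (hg : DifferentiableAt ℂ g z) :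
      DifferentiableAt ℂ (fun z => F1 (g z)) z :=
    (differentiableOn_F1.differentiableAt (Complex.isOpen_slitPlane.mem_nhds hmem)).comp z hg
  have hid := hF hz differentiableAt_id
  have hdouble := hF (g := fun z => 2 * z)
    (by simpa using ofReal_mul_mem_slitPlane hz two_pos) (by fun_prop)
  have hhalf := hF (g := fun z => z / 2) (div_two_mem_slitPlane hz) (by fun_prop)
  have hmean := hF (g := fun z => (z + 1) / 2) (div_two_mem_slitPlane hadd) (by fun_prop)
  have hharmonic := hF (g := fun z => 2 * z / (z + 1)) (two_mul_div_add_one_mem_slitPlane hz)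
    (by fun_prop (disch := assumption))
  have hcoeff : DifferentiableAt ℂ (fun z => 1 / (z + 1)) z := by
    fun_prop (disch := assumption)
  exact (((((hid.const_mul 2).sub hdouble).sub (hhalf.const_mul (1 / 2))).sub
    (hmean.const_mul (1 / 2))).sub (hcoeff.mul hharmonic)).differentiableWithinAt

theorem ramanujan_five_term_relation (x : ℂ) (hx : x ∈ Complex.slitPlane) :
    2 * F1 x - F1 (2 * x) - (1 / 2) * F1 (x / 2) - (1 / 2) * F1 ((x + 1) / 2) -
      (1 / (x + 1)) * F1 (2 * x / (x + 1)) = 0 :=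
  eqOn_slitPlane_of_eq_ofReal differentiableOn_fiveTermF1 (differentiableOn_const 0)
    (fun _ hy => fiveTermF1_ofReal hy) hx
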